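/- Let α ≤ 0 and T ∈ D'(ℝ^d). Then T ∈ C^α if and only if there exists a test function φ ∈ D with ∫φ ≠ 0 such that for every n ∈ ℕ: |T(φ_x^ε)| ≲ ε^α uniformly for x ∈ ℚ^d ∩ B(0,n) and ε ∈ {2^{-k} : k ∈ ℕ}. -/

import Mathlib

open MeasureTheory Metric Set Filter

noncomputable section

abbrev Ed (d : ℕ) := EuclideanSpace ℝ (Fin d)

/-- Test functions: smooth compactly supported functions on ℝ^d. -/
def IsTestFunction {d : ℕ} (φ : Ed d → ℝ) : Prop :=
  ContDiff ℝ (⊤ : ℕ∞) φ ∧ HasCompactSupport φ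

/-- The scaled test function `φ_x^λ(z) = λ^{-d} φ(λ⁻¹(z - x))`. -/
def scaled {d : ℕ} (φ : Ed d → ℝ) (x : Ed d) (l : ℝ) : Ed d → ℝ :=
  fun z => (l ^ d)⁻¹ * φ (l⁻¹ • (z - x))

/-- The `C^r` norm: sup of the norms of the iterated derivatives of order ≤ r. -/
def Cnorm {d : ℕ} (r : ℕ) (φ : Ed d → ℝ) : ℝ :=
  ⨆ i : Fin (r + 1), ⨆ x : Ed d, ‖iteratedFDeriv ℝ (i : ℕ) φ x‖

/-- The family `B_r` of test functions supported in `B(0,1)` with `C^r` norm at most 1. -/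
def Br {d : ℕ} (r : ℕ) (ψ : Ed d → ℝ) : Prop :=
  IsTestFunction ψ ∧ tsupport ψ ⊆ closedBall (0 : Ed d) 1 ∧ Cnorm r ψ ≤ 1

/-- A linear functional is a distribution if on every compact set it is bounded
by some `C^r` norm. -/
def IsDistribution {d : ℕ} (T : (Ed d → ℝ) →ₗ[ℝ] ℝ) : Prop :=
  ∀ K : Set (Ed d), IsCompact K → ∃ r : ℕ, ∃ C : ℝ,
    ∀ φ : Ed d → ℝ, IsTestFunction φ → tsupport φ ⊆ K → |T φ| ≤ C * Cnorm r φ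

/-- A germ: a measurable family of distributions. -/
def IsGerm {d : ℕ} (F : Ed d → ((Ed d → ℝ) →ₗ[ℝ] ℝ)) : Prop :=
  (∀ x, IsDistribution (F x)) ∧
  ∀ ψ : Ed d → ℝ, IsTestFunction ψ → Measurable fun x => F x ψ

/-- Monomial `y^k` for a multi-index `k`. -/
def mono {d : ℕ} (k : Fin d → ℕ) (y : Ed d) : ℝ := ∏ i, (y i) ^ (k i)

/-- Convolution of two functions. -/
def conv {d : ℕ} (f g : Ed d → ℝ) : Ed d → ℝ := fun x => ∫ y, f (x - y) * g y

/-- `rIndex α` is the smallest integer `r > -α` (for `α ≤ 0`). -/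
def rIndex (α : ℝ) : ℕ := Nat.floor (-α) + 1

/-- Negative Hölder space condition `T ∈ C^α` for `α ≤ 0`. -/
def HolderNeg {d : ℕ} (α : ℝ) (T : (Ed d → ℝ) →ₗ[ℝ] ℝ) : Prop :=
  ∀ K : Set (Ed d), IsCompact K → ∃ C : ℝ, ∀ x ∈ K, ∀ ε ∈ Set.Ioc (0:ℝ) 1,
    ∀ ψ : Ed d → ℝ, Br (rIndex α) ψ → |T (scaled ψ x ε)| ≤ C * ε ^ α

/-- `(α,γ)`-coherence of a germ with respect to the test function φ. -/
def AlphaGammaCoherent {d : ℕ} (α γ : ℝ) (F : Ed d → ((Ed d → ℝ) →ₗ[ℝ] ℝ))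
    (φ : Ed d → ℝ) : Prop :=
  ∀ K : Set (Ed d), IsCompact K → ∃ C : ℝ, ∀ y ∈ K, ∀ z ∈ K, ∀ ε ∈ Set.Ioc (0:ℝ) 1,
    |F z (scaled φ y ε) - F y (scaled φ y ε)| ≤ C * ε ^ α * (‖z - y‖ + ε) ^ (γ - α)

/-- Global homogeneity bound β for a germ with respect to the test function φ. -/
def HomBound {d : ℕ} (β : ℝ) (F : Ed d → ((Ed d → ℝ) →ₗ[ℝ] ℝ)) (φ : Ed d → ℝ) : Prop :=
  ∀ K : Set (Ed d), IsCompact K → ∃ C : ℝ, ∀ x ∈ K, ∀ ε ∈ Set.Ioc (0:ℝ) 1,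
    |F x (scaled φ x ε)| ≤ C * ε ^ β

/-!
Extrapolation in the scale produces weights `c i` for which `κ = ∑ i, c i • φ^{2^{-i}}` has integral
one and vanishing moments up to order `m = ⌊-α⌋`, and `κ` inherits the dyadic bounds of `φ`. Write
`κ_n = κ^{2^{-n}}`. The numbers `u_n = T (κ_{n+1} ⋆ (κ_n ⋆ ψ))` tend to `T ψ`, and
`u_n - u_{n+1} = T (κ_{n+1} ⋆ (κ_n ⋆ ψ - κ_{n+2} ⋆ ψ))` because convolution commutes. By Taylor's
formula the inner difference is `O(2^{-n(m+1)})`, and the outer `κ_{n+1}` costs `O(2^{-nα})`, so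
the increments are summable as `m + 1 + α > 0`. The rational points suffice since
`x ↦ T (φ_x^ε)` is continuous.
-/

open scoped Convolution Topology

section Convolution

variable {E F F' : Type*} [NormedAddCommGroup E] [MeasurableSpace E]
  [NormedAddCommGroup F] [NormedSpace ℝ F] [NormedAddCommGroup F'] [NormedSpace ℝ F']
  {μ : Measure E} {k : E → ℝ} {f : E → F}

theorem comp_convolution_lsmul (e : F ≃L[ℝ] F') :
    e ∘ (k ⋆[ContinuousLinearMap.lsmul ℝ ℝ, μ] f) =
      k ⋆[ContinuousLinearMap.lsmul ℝ ℝ, μ] (e ∘ f) := by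
  ext x
  simp only [Function.comp_apply, convolution_def, ContinuousLinearMap.lsmul_apply,
    ← e.integral_comp_comm, map_smul]

theorem fderiv_convolution_lsmul [NormedSpace ℝ E] [BorelSpace E] [SFinite μ]
    [μ.IsAddLeftInvariant] (hk : LocallyIntegrable k μ) (hf : ContDiff ℝ 1 f)
    (hfc : HasCompactSupport f) :
    fderiv ℝ (k ⋆[ContinuousLinearMap.lsmul ℝ ℝ, μ] f) =
      k ⋆[ContinuousLinearMap.lsmul ℝ ℝ, μ] fderiv ℝ f :=
  funext fun x => (hfc.hasFDerivAt_convolution_right _ hk hf x).fderiv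

theorem iteratedFDeriv_convolution_lsmul [NormedSpace ℝ E] [BorelSpace E] [SFinite μ]
    [μ.IsAddLeftInvariant] (hk : LocallyIntegrable k μ) (hf : ContDiff ℝ (⊤ : ℕ∞) f)
    (hfc : HasCompactSupport f) (i : ℕ) :
    iteratedFDeriv ℝ i (k ⋆[ContinuousLinearMap.lsmul ℝ ℝ, μ] f) =
      k ⋆[ContinuousLinearMap.lsmul ℝ ℝ, μ] iteratedFDeriv ℝ i f := by
  induction i with
  | zero =>
    rw [iteratedFDeriv_zero_eq_comp, iteratedFDeriv_zero_eq_comp]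
    exact comp_convolution_lsmul
      (continuousMultilinearCurryFin0 ℝ E F).symm.toContinuousLinearEquiv
  | succ i ih =>
    rw [iteratedFDeriv_succ_eq_comp_left, iteratedFDeriv_succ_eq_comp_left, ih,
      fderiv_convolution_lsmul hk (hf.iteratedFDeriv_right (by exact_mod_cast le_top))
        (hfc.iteratedFDeriv i)]
    exact comp_convolution_lsmul (F := E →L[ℝ] E [×i]→L[ℝ] F) (μ := μ)
      (continuousMultilinearCurryLeftEquiv ℝ (fun _ => E) F).symm.toContinuousLinearEquiv

theorem norm_convolution_lsmul_le (hk : Integrable k μ) {B : ℝ} (hf : ∀ x, ‖f x‖ ≤ B)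
    (x : E) :
    ‖(k ⋆[ContinuousLinearMap.lsmul ℝ ℝ, μ] f) x‖ ≤ (∫ y, |k y| ∂μ) * B := by
  rw [convolution_def, ← integral_mul_const]
  refine norm_integral_le_of_norm_le (hk.abs.mul_const B) (Eventually.of_forall fun y => ?_)
  rw [ContinuousLinearMap.lsmul_apply, norm_smul, Real.norm_eq_abs]
  exact mul_le_mul_of_nonneg_left (hf _) (abs_nonneg _)

theorem convolution_mul_left_comm [BorelSpace E] [IsFiniteMeasureOnCompacts μ]
    {l f : E → ℝ} (hk : Continuous k) (hkc : HasCompactSupport k)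
    (hl : Continuous l) (hlc : HasCompactSupport l) (hf : Continuous f) :
    k ⋆[ContinuousLinearMap.lsmul ℝ ℝ, μ] (l ⋆[ContinuousLinearMap.lsmul ℝ ℝ, μ] f) =
      l ⋆[ContinuousLinearMap.lsmul ℝ ℝ, μ] (k ⋆[ContinuousLinearMap.lsmul ℝ ℝ, μ] f) := by
  ext x
  simp only [convolution_def, ContinuousLinearMap.lsmul_apply, ← integral_smul]
  rw [integral_integral_swap_of_hasCompactSupport]
  · refine integral_congr_ae (Eventually.of_forall fun y => ?_)
    refine integral_congr_ae (Eventually.of_forall fun z => ?_)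
    simp only [sub_right_comm, smul_eq_mul, mul_left_comm]
  · fun_prop
  · refine HasCompactSupport.of_support_subset_isCompact (hkc.isCompact.prod hlc.isCompact) ?_
    rintro ⟨y, z⟩ hyz
    simp only [Function.uncurry, Function.mem_support, smul_ne_zero_iff] at hyz
    exact ⟨subset_tsupport _ hyz.1, subset_tsupport _ hyz.2.1⟩

theorem convolution_lsmul_sub [BorelSpace E] [IsFiniteMeasureOnCompacts μ] {g : E → F}
    (hk : Continuous k) (hkc : HasCompactSupport k) (hf : Continuous f) (hg : Continuous g) :
    k ⋆[ContinuousLinearMap.lsmul ℝ ℝ, μ] (f - g) =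
      k ⋆[ContinuousLinearMap.lsmul ℝ ℝ, μ] f - k ⋆[ContinuousLinearMap.lsmul ℝ ℝ, μ] g := by
  have hint {h : E → F} (hh : Continuous h) (x : E) : Integrable (fun y => k y • h (x - y)) μ :=
    (by fun_prop : Continuous fun y => k y • h (x - y)).integrable_of_hasCompactSupport
      hkc.smul_right
  ext x
  simp only [convolution_def, ContinuousLinearMap.lsmul_apply, Pi.sub_apply, smul_sub,
    integral_sub (hint hf x) (hint hg x)]

theorem convolution_lsmul_comm [BorelSpace E] [μ.IsAddLeftInvariant] [μ.IsNegInvariant]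
    (k l : E → ℝ) :
    k ⋆[ContinuousLinearMap.lsmul ℝ ℝ, μ] l = l ⋆[ContinuousLinearMap.lsmul ℝ ℝ, μ] k := by
  rw [← convolution_flip]
  congr 1
  ext
  rfl

end Convolution

section HahnBanach

theorem exists_continuousLinearMap_apply_eq_of_norm_le {𝕜 V X : Type*} [RCLike 𝕜]
    [AddCommGroup V] [Module 𝕜 V] [NormedAddCommGroup X] [NormedSpace 𝕜 X]
    (J : V →ₗ[𝕜] X) (T : V →ₗ[𝕜] 𝕜) {C : ℝ} (h : ∀ v, ‖T v‖ ≤ C * ‖J v‖) :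
    ∃ L : X →L[𝕜] 𝕜, ∀ v, L (J v) = T v := by
  have hker : LinearMap.ker J ≤ LinearMap.ker T := fun v hv => by
    simpa [LinearMap.mem_ker.1 hv] using h v
  let T₀ : LinearMap.range J →ₗ[𝕜] 𝕜 :=
    (LinearMap.ker J).liftQ T hker ∘ₗ J.quotKerEquivRange.symm.toLinearMap
  have hT₀ (v : V) : T₀ (J.rangeRestrict v) = T v := by
    have : J.rangeRestrict v = J.quotKerEquivRange (Submodule.Quotient.mk v) := rfl
    simp [T₀, this]
  have hbound : ∀ w, ‖T₀ w‖ ≤ C * ‖w‖ := by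
    rintro ⟨_, v, rfl⟩
    exact (congrArg _ (hT₀ v)).trans_le (h v)
  obtain ⟨L, hL, -⟩ := exists_extension_norm_eq _ (T₀.mkContinuous C hbound)
  exact ⟨L, fun v => (hL (J.rangeRestrict v)).trans (hT₀ v)⟩

end HahnBanach

section Jet

variable {E : Type*} [NormedAddCommGroup E] [NormedSpace ℝ E] {f : E → ℝ} {q : ℕ}

/-- The space of jets of order `q` of real functions on `E` at a point: one entry for each
derivative of order at most `q`, with the maximum norm. -/
def JetSpace (E : Type*) [NormedAddCommGroup E] [NormedSpace ℝ E] (q : ℕ) : Type _ :=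
  ∀ i : Fin (q + 1), E [×(i : ℕ)]→L[ℝ] ℝ

instance : NormedAddCommGroup (JetSpace E q) :=
  inferInstanceAs (NormedAddCommGroup (∀ i : Fin (q + 1), E [×(i : ℕ)]→L[ℝ] ℝ))

instance : NormedSpace ℝ (JetSpace E q) :=
  inferInstanceAs (NormedSpace ℝ (∀ i : Fin (q + 1), E [×(i : ℕ)]→L[ℝ] ℝ))

instance : CompleteSpace (JetSpace E q) :=
  inferInstanceAs (CompleteSpace (∀ i : Fin (q + 1), E [×(i : ℕ)]→L[ℝ] ℝ))

/-- The jet of order `q` of `f`, as a function of the base point. -/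
def jet (q : ℕ) (f : E → ℝ) : E → JetSpace E q := fun x i => iteratedFDeriv ℝ i f x

theorem continuous_jet (hf : ContDiff ℝ (⊤ : ℕ∞) f) : Continuous (jet q f) :=
  continuous_pi fun _ => hf.continuous_iteratedFDeriv (by exact_mod_cast le_top)

theorem hasCompactSupport_jet (hf : HasCompactSupport f) : HasCompactSupport (jet q f) :=
  hf.mono' fun x hx => by
    contrapose! hx
    have hzero (i : ℕ) : iteratedFDeriv ℝ i f x = 0 :=
      image_eq_zero_of_notMem_tsupport fun h => hx (tsupport_iteratedFDeriv_subset i h)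
    exact not_not.2 (funext fun i => hzero i)

theorem jet_comp_sub (y : E) : jet q (fun x => f (x - y)) = fun x => jet q f (x - y) :=
  funext₂ fun _ i => iteratedFDeriv_comp_sub i y _

theorem jet_convolution [MeasurableSpace E] [BorelSpace E] {μ : Measure E} [SFinite μ]
    [μ.IsAddLeftInvariant] {k : E → ℝ} (hk : LocallyIntegrable k μ)
    (hf : ContDiff ℝ (⊤ : ℕ∞) f) (hfc : HasCompactSupport f) :
    jet q (k ⋆[ContinuousLinearMap.lsmul ℝ ℝ, μ] f) =
      k ⋆[ContinuousLinearMap.lsmul ℝ ℝ, μ] jet q f := by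
  ext1 x
  have hint : Integrable (fun y => k y • jet q f (x - y)) μ :=
    (hasCompactSupport_jet hfc).convolutionExists_right (ContinuousLinearMap.lsmul ℝ ℝ) hk
      (continuous_jet hf) x
  funext i
  exact (congrFun (iteratedFDeriv_convolution_lsmul hk hf hfc i) x).trans
    ((ContinuousLinearMap.proj (R := ℝ) (φ := fun i : Fin (q + 1) => E [×(i : ℕ)]→L[ℝ] ℝ)
      i).integral_comp_comm hint)

end Jet

section TestFunction

variable {d : ℕ} {f g : Ed d → ℝ}

theorem IsTestFunction.continuous (hf : IsTestFunction f) : Continuous f := hf.1.continuous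

theorem IsTestFunction.integrable (hf : IsTestFunction f) : Integrable f :=
  hf.continuous.integrable_of_hasCompactSupport hf.2

theorem IsTestFunction.comp_sub (hf : IsTestFunction f) (y : Ed d) :
    IsTestFunction fun x => f (x - y) :=
  ⟨hf.1.comp (contDiff_id.sub contDiff_const), hf.2.comp_homeomorph (Homeomorph.subRight y)⟩

theorem IsTestFunction.convolution (hg : Continuous g) (hgc : HasCompactSupport g)
    (hf : IsTestFunction f) : IsTestFunction (g ⋆ f) :=
  ⟨hf.2.contDiff_convolution_right _ hg.locallyIntegrable hf.1, hgc.convolution _ hf.2⟩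

/-- The space of test functions supported in `K`. -/
def testFunctionsIn (K : Set (Ed d)) : Submodule ℝ (Ed d → ℝ) where
  carrier := {f | IsTestFunction f ∧ tsupport f ⊆ K}
  add_mem' hf hg := ⟨⟨hf.1.1.add hg.1.1, hf.1.2.add hg.1.2⟩,
    (tsupport_add _ _).trans (union_subset hf.2 hg.2)⟩
  zero_mem' := ⟨⟨contDiff_const, HasCompactSupport.zero⟩, by simp⟩
  smul_mem' c f hf := ⟨⟨contDiff_const.smul hf.1.1, hf.1.2.smul_left (f := fun _ => c)⟩,
    (tsupport_smul_subset_right (fun _ => c) f).trans hf.2⟩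

/-- The jet of a test function, as a bounded continuous field of jets. -/
def IsTestFunction.boundedJet (hf : IsTestFunction f) (q : ℕ) :
    BoundedContinuousFunction (Ed d) (JetSpace (Ed d) q) :=
  have hbound := (hasCompactSupport_jet hf.2).exists_bound_of_continuous (continuous_jet hf.1)
  BoundedContinuousFunction.ofNormedAddCommGroup (jet q f) (continuous_jet hf.1)
    hbound.choose hbound.choose_spec

theorem IsTestFunction.Cnorm_le_norm_boundedJet (hf : IsTestFunction f) (q : ℕ) :
    Cnorm q f ≤ ‖hf.boundedJet q‖ :=
  ciSup_le fun i => ciSup_le fun x =>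
    (norm_le_pi_norm (hf.boundedJet q x) i).trans ((hf.boundedJet q).norm_coe_le_norm x)

theorem IsTestFunction.norm_iteratedFDeriv_le_Cnorm (hf : IsTestFunction f) {i q : ℕ} (hi : i ≤ q)
    (x : Ed d) : ‖iteratedFDeriv ℝ i f x‖ ≤ Cnorm q f := by
  have hbdd (j : Fin (q + 1)) : BddAbove (range fun x => ‖iteratedFDeriv ℝ j f x‖) :=
    ⟨‖hf.boundedJet q‖, forall_mem_range.2 fun x =>
      (norm_le_pi_norm (hf.boundedJet q x) j).trans ((hf.boundedJet q).norm_coe_le_norm x)⟩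
  exact (le_ciSup (hbdd ⟨i, Nat.lt_succ_of_le hi⟩) x).trans
    (le_ciSup (f := fun j : Fin (q + 1) => ⨆ x, ‖iteratedFDeriv ℝ j f x‖)
      (finite_range _).bddAbove ⟨i, Nat.lt_succ_of_le hi⟩)

theorem Cnorm_nonneg (q : ℕ) (f : Ed d → ℝ) : 0 ≤ Cnorm q f :=
  Real.iSup_nonneg fun _ => Real.iSup_nonneg fun _ => norm_nonneg _

theorem IsTestFunction.continuous_boundedJet_comp_sub (hf : IsTestFunction f) (q : ℕ) :
    Continuous fun y => (hf.comp_sub y).boundedJet q := by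
  have huc : UniformContinuous (jet q f) :=
    (hasCompactSupport_jet hf.2).uniformContinuous_of_continuous (continuous_jet hf.1)
  refine continuous_iff_continuousAt.2 fun y₀ =>
    BoundedContinuousFunction.tendsto_iff_tendstoUniformly.2 ?_
  rw [Metric.tendstoUniformly_iff]
  intro ε hε
  obtain ⟨δ, hδ, h⟩ := Metric.uniformContinuous_iff.1 huc ε hε
  filter_upwards [ball_mem_nhds y₀ hδ] with y hy x
  change dist (jet q (fun x => f (x - y₀)) x) (jet q (fun x => f (x - y)) x) < ε
  rw [jet_comp_sub, jet_comp_sub]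
  exact h (by rwa [dist_sub_left, dist_comm])

theorem tsupport_comp_sub_subset {a b : ℝ} (hf : tsupport f ⊆ closedBall 0 a) {y : Ed d}
    (hy : ‖y‖ ≤ b) : tsupport (fun x => f (x - y)) ⊆ closedBall 0 (a + b) := by
  refine closure_minimal (fun x hx => ?_) isClosed_closedBall
  have hxy : ‖x - y‖ ≤ a := by simpa using hf (subset_tsupport _ hx)
  simpa using (norm_le_norm_sub_add x y).trans (add_le_add hxy hy)

theorem tsupport_convolution_subset {a b : ℝ} (hg : tsupport g ⊆ closedBall 0 a)
    (hf : tsupport f ⊆ closedBall 0 b) : tsupport (g ⋆ f) ⊆ closedBall 0 (a + b) := by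
  refine closure_minimal (fun x hx => ?_) isClosed_closedBall
  obtain ⟨y, hy, z, hz, rfl⟩ := support_convolution_subset _ hx
  have hya : ‖y‖ ≤ a := by simpa using hg (subset_tsupport _ hy)
  have hzb : ‖z‖ ≤ b := by simpa using hf (subset_tsupport _ hz)
  simpa using (norm_add_le y z).trans (add_le_add hya hzb)

theorem exists_tsupport_subset_closedBall (hf : HasCompactSupport f) :
    ∃ a > 0, tsupport f ⊆ closedBall 0 a :=
  hf.isCompact.isBounded.subset_closedBall_lt 0 0

end TestFunction

section Distribution

variable {d : ℕ} {T : (Ed d → ℝ) →ₗ[ℝ] ℝ} {f g : Ed d → ℝ}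

theorem IsDistribution.exists_eq_apply_boundedJet (hT : IsDistribution T) {K : Set (Ed d)}
    (hK : IsCompact K) :
    ∃ (q : ℕ) (L : BoundedContinuousFunction (Ed d) (JetSpace (Ed d) q) →L[ℝ] ℝ),
      ∀ (f : Ed d → ℝ) (hf : IsTestFunction f), tsupport f ⊆ K → T f = L (hf.boundedJet q) := by
  obtain ⟨q, C, hC⟩ := hT K hK
  let J : testFunctionsIn K →ₗ[ℝ] BoundedContinuousFunction (Ed d) (JetSpace (Ed d) q) :=
    { toFun := fun f => f.2.1.boundedJet q
      map_add' := fun f g => by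
        ext1 x
        exact funext fun i => iteratedFDeriv_add_apply
          (f.2.1.1.contDiffAt.of_le (by exact_mod_cast le_top))
          (g.2.1.1.contDiffAt.of_le (by exact_mod_cast le_top))
      map_smul' := fun c f => by
        ext1 x
        exact funext fun i => iteratedFDeriv_const_smul_apply
          (f.2.1.1.contDiffAt.of_le (by exact_mod_cast le_top)) }
  have hJ (f : testFunctionsIn K) : ‖(T ∘ₗ (testFunctionsIn K).subtype) f‖ ≤ |C| * ‖J f‖ := calc
    |T f| ≤ C * Cnorm q (f : Ed d → ℝ) := hC f f.2.1 f.2.2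
    _ ≤ |C| * Cnorm q (f : Ed d → ℝ) := by gcongr; exacts [Cnorm_nonneg q _, le_abs_self C]
    _ ≤ |C| * ‖J f‖ := by gcongr; exact f.2.1.Cnorm_le_norm_boundedJet q
  obtain ⟨L, hL⟩ := exists_continuousLinearMap_apply_eq_of_norm_le J _ hJ
  exact ⟨q, L, fun f hf hfK => (hL ⟨f, hf, hfK⟩).symm⟩

theorem IsDistribution.tendsto (hT : IsDistribution T) {K : Set (Ed d)} (hK : IsCompact K)
    {ι : Type*} {p : Filter ι} {u : ι → Ed d → ℝ} (hu : ∀ n, IsTestFunction (u n))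
    (huK : ∀ n, tsupport (u n) ⊆ K) (hf : IsTestFunction f) (hfK : tsupport f ⊆ K)
    (h : ∀ q, TendstoUniformly (fun n => jet q (u n)) (jet q f) p) :
    Tendsto (fun n => T (u n)) p (𝓝 (T f)) := by
  obtain ⟨q, L, hL⟩ := hT.exists_eq_apply_boundedJet hK
  simp only [fun n => hL (u n) (hu n) (huK n), hL f hf hfK]
  exact (L.continuous.tendsto _).comp
    (BoundedContinuousFunction.tendsto_iff_tendstoUniformly.2 (h q))

theorem IsDistribution.continuous_apply_comp_sub (hT : IsDistribution T) (hf : IsTestFunction f) :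
    Continuous fun y => T fun x => f (x - y) := by
  refine continuous_iff_continuousAt.2 fun y₀ => ?_
  obtain ⟨a, -, ha⟩ := exists_tsupport_subset_closedBall hf.2
  obtain ⟨q, L, hL⟩ := hT.exists_eq_apply_boundedJet (isCompact_closedBall 0 (a + (‖y₀‖ + 1)))
  refine (L.continuous.comp (hf.continuous_boundedJet_comp_sub q)).continuousAt.congr ?_
  filter_upwards [ball_mem_nhds y₀ one_pos] with y hy
  exact (hL _ _ (tsupport_comp_sub_subset ha (norm_lt_of_mem_ball hy).le)).symm

theorem IsDistribution.apply_convolution (hT : IsDistribution T) (hg : Continuous g)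
    (hgc : HasCompactSupport g) (hf : IsTestFunction f) :
    T (g ⋆ f) = ∫ y, g y * T fun x => f (x - y) := by
  obtain ⟨a, -, ha⟩ := exists_tsupport_subset_closedBall hf.2
  obtain ⟨b, -, hb⟩ := exists_tsupport_subset_closedBall hgc
  obtain ⟨q, L, hL⟩ := hT.exists_eq_apply_boundedJet (isCompact_closedBall 0 (a + b))
  have hgf : IsTestFunction (g ⋆ f) := hf.convolution hg hgc
  have hint : Integrable fun y => g y • (hf.comp_sub y).boundedJet q :=
    (hg.smul (hf.continuous_boundedJet_comp_sub q)).integrable_of_hasCompactSupport hgc.smul_right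
  have hjet : hgf.boundedJet q = ∫ y, g y • (hf.comp_sub y).boundedJet q := by
    ext1 x
    refine (congrFun (jet_convolution hg.locallyIntegrable hf.1 hf.2) x).trans ?_
    refine Eq.trans ?_ ((BoundedContinuousFunction.evalCLM ℝ x).integral_comp_comm hint)
    exact integral_congr_ae (Eventually.of_forall fun y =>
      congrArg (g y • ·) (congrFun (jet_comp_sub y) x).symm)
  rw [hL _ hgf (add_comm b a ▸ tsupport_convolution_subset hb ha), hjet,
    ← L.integral_comp_comm hint]
  refine integral_congr_ae (Eventually.of_forall fun y => ?_)
  simp only [map_smul, smul_eq_mul, mul_eq_mul_left_iff, or_iff_not_imp_right]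
  intro hy
  have hyb : ‖y‖ ≤ b := by simpa using hb (subset_tsupport _ hy)
  exact (hL _ _ (tsupport_comp_sub_subset ha hyb)).symm

theorem IsDistribution.abs_apply_convolution_le (hT : IsDistribution T) (hg : Continuous g)
    (hgc : HasCompactSupport g) (hf : IsTestFunction f) {M : ℝ}
    (hM : ∀ y ∈ tsupport g, |T fun x => f (x - y)| ≤ M) :
    |T (g ⋆ f)| ≤ (∫ y, |g y|) * M := by
  rw [hT.apply_convolution hg hgc hf, ← integral_mul_const, ← Real.norm_eq_abs]
  have hgi : Integrable g := hg.integrable_of_hasCompactSupport hgc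
  refine norm_integral_le_of_norm_le (hgi.abs.mul_const M) (Eventually.of_forall fun y => ?_)
  rw [Real.norm_eq_abs, abs_mul]
  by_cases hy : y ∈ tsupport g
  · exact mul_le_mul_of_nonneg_left (hM y hy) (abs_nonneg _)
  · simp [image_eq_zero_of_notMem_tsupport hy]

end Distribution

section Scaled

variable {d : ℕ} {f : Ed d → ℝ} {l : ℝ}

theorem scaled_apply_add_smul (f : Ed d → ℝ) (x z : Ed d) (hl : l ≠ 0) :
    scaled f x l (x + l • z) = (l ^ d)⁻¹ * f z := by
  rw [scaled, add_sub_cancel_left, inv_smul_smul₀ hl]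

theorem scaled_comp_sub (f : Ed d → ℝ) (x y : Ed d) (l : ℝ) :
    (fun z => scaled f x l (z - y)) = scaled f (x + y) l := by
  ext z
  simp only [scaled, sub_sub, add_comm y x]

theorem scaled_scaled (f : Ed d → ℝ) (x y : Ed d) (l : ℝ) {h : ℝ} (hh : h ≠ 0) :
    scaled (scaled f y l) x h = scaled f (x + h • y) (h * l) := by
  ext z
  have hz : l⁻¹ • (h⁻¹ • (z - x) - y) = (h * l)⁻¹ • (z - (x + h • y)) := by
    rw [mul_inv, mul_comm, mul_smul, ← sub_sub, smul_sub h⁻¹ (z - x), inv_smul_smul₀ hh]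
  simp only [scaled, hz, mul_pow, mul_inv, mul_assoc]

/-- Rescaling `f ↦ f_x^l` as a linear map. -/
def scaledₗ (x : Ed d) (l : ℝ) : (Ed d → ℝ) →ₗ[ℝ] (Ed d → ℝ) where
  toFun f := scaled f x l
  map_add' f g := funext fun _ => mul_add _ (f _) (g _)
  map_smul' c f := funext fun _ => mul_left_comm _ c (f _)

theorem IsTestFunction.rescale (hf : IsTestFunction f) (x : Ed d) (hl : l ≠ 0) :
    IsTestFunction (scaled f x l) := by
  refine ⟨contDiff_const.mul (hf.1.comp (by fun_prop)), HasCompactSupport.mul_left ?_⟩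
  exact (hf.2.comp_smul (inv_ne_zero hl)).comp_homeomorph (Homeomorph.subRight x)

theorem tsupport_scaled_subset {a : ℝ} (hf : tsupport f ⊆ closedBall 0 a) (x : Ed d) (hl : 0 < l) :
    tsupport (scaled f x l) ⊆ closedBall x (l * a) := by
  refine closure_minimal (fun z hz => ?_) isClosed_closedBall
  have hfz : ‖l⁻¹ • (z - x)‖ ≤ a := by
    simpa using hf (subset_tsupport _ (right_ne_zero_of_mul hz))
  rwa [norm_smul, Real.norm_of_nonneg (by positivity), inv_mul_le_iff₀ hl, ← dist_eq_norm] at hfz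

theorem iteratedFDeriv_scaled (hf : ContDiff ℝ (⊤ : ℕ∞) f) (x : Ed d) (l : ℝ) (i : ℕ) (z : Ed d) :
    iteratedFDeriv ℝ i (scaled f x l) z =
      (l ^ d)⁻¹ • l⁻¹ ^ i • iteratedFDeriv ℝ i f (l⁻¹ • (z - x)) := by
  have hi : ContDiff ℝ i f := hf.of_le (by exact_mod_cast le_top)
  change iteratedFDeriv ℝ i (fun z => (fun w => (l ^ d)⁻¹ • f (l⁻¹ • w)) (z - x)) z = _
  rw [iteratedFDeriv_comp_sub (f := fun w => (l ^ d)⁻¹ • f (l⁻¹ • w)),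
    iteratedFDeriv_const_smul_apply' (ContDiff.contDiffAt (by fun_prop)),
    iteratedFDeriv_comp_const_smul _ hi]

theorem integral_scaled_mul (f g : Ed d → ℝ) (x : Ed d) (hl : 0 < l) :
    ∫ z, scaled f x l z * g z = ∫ z, f z * g (x + l • z) := by
  calc ∫ z, scaled f x l z * g z
      = ∫ z, scaled f x l (x + z) * g (x + z) :=
        (integral_add_left_eq_self (fun z => scaled f x l z * g z) x).symm
    _ = l ^ d * ∫ z, scaled f x l (x + l • z) * g (x + l • z) := by
        rw [Measure.integral_comp_smul_of_nonneg volume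
          (fun z => scaled f x l (x + z) * g (x + z)) l (hR := hl.le), finrank_euclideanSpace_fin,
          smul_eq_mul, mul_inv_cancel_left₀ (by positivity)]
    _ = ∫ z, f z * g (x + l • z) := by
        simp only [scaled_apply_add_smul f x _ hl.ne', mul_assoc, integral_const_mul]
        exact mul_inv_cancel_left₀ (by positivity) _

theorem abs_scaled (f : Ed d → ℝ) (x z : Ed d) (hl : 0 ≤ l) :
    |scaled f x l z| = scaled (fun w => |f w|) x l z := by
  simp only [scaled, abs_mul, abs_inv, abs_pow, abs_of_nonneg hl]

theorem integral_abs_scaled (f : Ed d → ℝ) (x : Ed d) (hl : 0 < l) :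
    ∫ z, |scaled f x l z| = ∫ z, |f z| := by
  simp only [abs_scaled f x _ hl.le]
  simpa using integral_scaled_mul (fun z => |f z|) (fun _ => 1) x hl

end Scaled

section Mollifier

theorem exists_sum_mul_pow_eq_pow {F ι : Type*} [Field F] {s : Finset ι} {v : ι → F}
    (hv : Set.InjOn v s) (x : F) :
    ∃ b : ι → F, ∀ j < s.card, ∑ i ∈ s, b i * v i ^ j = x ^ j := by
  classical
  refine ⟨fun i => (Lagrange.basis s v i).eval x, fun j hj => ?_⟩
  have hdeg : (Polynomial.X ^ j : Polynomial F).degree < s.card := by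
    rw [Polynomial.degree_X_pow]
    exact_mod_cast hj
  have h := congrArg (Polynomial.eval x) (Lagrange.eq_interpolate hv hdeg)
  simpa [Polynomial.eval_finsetSum, mul_comm] using h.symm

/-- `κ` is a mollifier of order `m`: against polynomials of degree at most `m`, it acts as the Dirac
mass at `0`. Homogeneous polynomials of degree `j` are encoded as the diagonal restrictions of
`j`-linear forms, so the condition says that `κ` has integral `1` (`j = 0`) and vanishing moments
of orders `1, …, m`. -/
structure IsMollifierOfOrder {d : ℕ} (m : ℕ) (κ : Ed d → ℝ) : Prop where
  isTestFunction : IsTestFunction κ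
  integral_mul_apply : ∀ j ≤ m, ∀ A : Ed d [×j]→L[ℝ] ℝ, ∫ z, κ z * A (fun _ => z) = A 0

variable {d m : ℕ} {κ φ : Ed d → ℝ}

theorem IsTestFunction.integrable_mul (hφ : IsTestFunction φ) {g : Ed d → ℝ} (hg : Continuous g) :
    Integrable fun z => φ z * g z :=
  (hφ.continuous.mul hg).integrable_of_hasCompactSupport hφ.2.mul_right

theorem IsMollifierOfOrder.integral_eq_one (hκ : IsMollifierOfOrder m κ) : ∫ z, κ z = 1 := by
  simpa using hκ.integral_mul_apply 0 m.zero_le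
    (ContinuousMultilinearMap.constOfIsEmpty ℝ (fun _ : Fin 0 => Ed d) 1)

theorem IsMollifierOfOrder.integral_mul_apply_map (hκ : IsMollifierOfOrder m κ) {j : ℕ} (hj : j ≤ m)
    (A : Ed d [×j]→L[ℝ] ℝ) (L : Ed d →L[ℝ] Ed d) : ∫ z, κ z * A (fun _ => L z) = A 0 := by
  refine (hκ.integral_mul_apply j hj (A.compContinuousLinearMap fun _ => L)).trans ?_
  exact congrArg A (funext fun _ => map_zero L)

theorem IsMollifierOfOrder.rescale (hκ : IsMollifierOfOrder m κ) {l : ℝ} (hl : 0 < l) :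
    IsMollifierOfOrder m (scaled κ 0 l) where
  isTestFunction := hκ.isTestFunction.rescale 0 hl.ne'
  integral_mul_apply j hj A := by
    simp only [integral_scaled_mul κ _ 0 hl, zero_add]
    exact hκ.integral_mul_apply_map hj A (l • ContinuousLinearMap.id ℝ (Ed d))

theorem integral_scaled_mul_apply {j : ℕ} (φ : Ed d → ℝ) (A : Ed d [×j]→L[ℝ] ℝ) {l : ℝ}
    (hl : 0 < l) :
    ∫ z, scaled φ 0 l z * A (fun _ => z) = l ^ j * ∫ z, φ z * A fun _ => z := by
  have hA (z : Ed d) : A (fun _ => l • z) = l ^ j * A fun _ => z := by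
    simpa using A.map_smul_univ (fun _ => l) fun _ => z
  simp only [integral_scaled_mul φ _ 0 hl, zero_add, hA, ← integral_const_mul]
  exact integral_congr_ae (Eventually.of_forall fun z => mul_left_comm _ _ _)

/-- The weights extrapolate polynomials from the dyadic scales to scale `0`, where `φ` acts as a
multiple of the Dirac mass. -/
theorem exists_isMollifierOfOrder_sum_smul_scaled (hφ : IsTestFunction φ) (hφ0 : ∫ z, φ z ≠ 0)
    (m : ℕ) :
    ∃ c : ℕ → ℝ,
      IsMollifierOfOrder m (∑ i ∈ Finset.range (m + 1), c i • scaled φ 0 ((1 / 2) ^ i)) := by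
  have hinj : Function.Injective fun i : ℕ => (1 / 2 : ℝ) ^ i :=
    pow_right_injective₀ (by norm_num) (by norm_num)
  obtain ⟨b, hb⟩ := exists_sum_mul_pow_eq_pow (s := Finset.range (m + 1)) hinj.injOn 0
  refine ⟨fun i => (∫ z, φ z)⁻¹ * b i, ?_, fun j hj A => ?_⟩
  · refine (Submodule.sum_mem (testFunctionsIn univ) fun i _ => Submodule.smul_mem _ _ ?_).1
    exact ⟨hφ.rescale 0 (by positivity), subset_univ _⟩
  have hA0 : 0 ^ j * ∫ z, φ z * A (fun _ => z) = (∫ z, φ z) * A 0 := by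
    cases j with
    | zero =>
      have hconst (z : Ed d) : A (fun _ => z) = A 0 := congrArg A (Subsingleton.elim _ _)
      simp only [hconst, pow_zero, one_mul, integral_mul_const]
    | succ j => simp [A.map_zero]
  have hA : Continuous fun z => A fun _ => z := by fun_prop
  calc ∫ z, (∑ i ∈ Finset.range (m + 1), ((∫ z, φ z)⁻¹ * b i) • scaled φ 0 ((1 / 2) ^ i)) z *
        A (fun _ => z)
      = ∑ i ∈ Finset.range (m + 1), ((∫ z, φ z)⁻¹ * b i) *
          ∫ z, scaled φ 0 ((1 / 2) ^ i) z * A (fun _ => z) := by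
        simp only [Finset.sum_apply, Pi.smul_apply, smul_eq_mul, Finset.sum_mul, mul_assoc]
        rw [integral_finsetSum _ fun i _ => ?_]
        · simp only [integral_const_mul]
        · exact (((hφ.rescale 0 (by positivity)).integrable_mul hA).const_mul _).const_mul _
    _ = (∫ z, φ z)⁻¹ * ((∑ i ∈ Finset.range (m + 1), b i * ((1 / 2) ^ i) ^ j) *
          ∫ z, φ z * A fun _ => z) := by
        simp only [fun i : ℕ =>
          integral_scaled_mul_apply φ A (show (0 : ℝ) < (1 / 2) ^ i by positivity),
          Finset.sum_mul, Finset.mul_sum, mul_assoc]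
    _ = A 0 := by
        rw [hb j (by simpa using Nat.lt_succ_of_le hj), hA0, inv_mul_cancel_left₀ hφ0]

end Mollifier

section Approximation

theorem norm_add_sub_taylor_le {E F : Type*} [NormedAddCommGroup E] [NormedSpace ℝ E]
    [NormedAddCommGroup F] [NormedSpace ℝ F] [CompleteSpace F] {f : E → F} {m : ℕ} {B : ℝ}
    (hf : ContDiff ℝ (m + 1) f) (hB : ∀ x, ‖iteratedFDeriv ℝ (m + 1) f x‖ ≤ B) (x y : E) :
    ‖f (x + y) - ∑ j ∈ Finset.range (m + 1),
        (j.factorial : ℝ)⁻¹ • iteratedFDeriv ℝ j f x (fun _ => y)‖ ≤ B * ‖y‖ ^ (m + 1) := by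
  have hD (z : E) : ‖iteratedFDeriv ℝ (m + 1) f z (fun _ => y)‖ ≤ B * ‖y‖ ^ (m + 1) := by
    refine ((iteratedFDeriv ℝ (m + 1) f z).le_opNorm _).trans ?_
    simpa using mul_le_mul_of_nonneg_right (hB z) (by positivity)
  have hint : ‖∫ t in (0 : ℝ)..1, (1 - t) ^ m •
      iteratedFDeriv ℝ (m + 1) f (x + t • y) (fun _ => y)‖ ≤ B * ‖y‖ ^ (m + 1) := by
    refine (intervalIntegral.norm_integral_le_of_norm_le_const fun t ht => ?_).trans_eq
      (by rw [sub_zero, abs_one, mul_one])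
    rw [uIoc_of_le zero_le_one] at ht
    rw [norm_smul, norm_pow, Real.norm_of_nonneg (sub_nonneg.2 ht.2)]
    exact (mul_le_of_le_one_left (norm_nonneg _)
      (pow_le_one₀ (sub_nonneg.2 ht.2) (sub_le_self _ ht.1.le))).trans (hD _)
  have hfact : ‖(m.factorial : ℝ)⁻¹‖ ≤ 1 := by
    rw [norm_inv, Real.norm_natCast]
    exact inv_le_one_of_one_le₀ (by exact_mod_cast m.factorial_pos)
  rw [map_add_eq_sum_add_integral_iteratedFDeriv (n := m) fun t _ => hf.contDiffAt,
    add_sub_cancel_left, norm_smul]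
  exact (mul_le_of_le_one_left (norm_nonneg _) hfact).trans hint

variable {d m : ℕ} {κ f : Ed d → ℝ} {B : ℝ}

theorem IsMollifierOfOrder.integral_mul_taylor (hκ : IsMollifierOfOrder m κ) (f : Ed d → ℝ)
    (x : Ed d) :
    ∫ z, κ z * ∑ j ∈ Finset.range (m + 1),
      (j.factorial : ℝ)⁻¹ • iteratedFDeriv ℝ j f x (fun _ => -z) = f x := by
  have hmoment (j : ℕ) (hj : j ∈ Finset.range (m + 1)) :
      ∫ z, κ z * ((j.factorial : ℝ)⁻¹ • iteratedFDeriv ℝ j f x fun _ => -z) =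
        (j.factorial : ℝ)⁻¹ • iteratedFDeriv ℝ j f x 0 := by
    rw [← hκ.integral_mul_apply_map (Finset.mem_range_succ_iff.1 hj) (iteratedFDeriv ℝ j f x)
      (-ContinuousLinearMap.id ℝ (Ed d)), ← integral_smul]
    exact integral_congr_ae (Eventually.of_forall fun z => mul_left_comm _ _ _)
  simp only [Finset.mul_sum]
  rw [integral_finsetSum _ fun j _ => hκ.isTestFunction.integrable_mul (by fun_prop),
    Finset.sum_congr rfl hmoment, Finset.sum_range_succ', Finset.sum_eq_zero fun j _ => by
      rw [ContinuousMultilinearMap.map_zero, smul_zero]]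
  simp

theorem IsMollifierOfOrder.abs_convolution_sub_le (hκ : IsMollifierOfOrder m κ)
    (hf : ContDiff ℝ (m + 1) f) (hB : ∀ x, ‖iteratedFDeriv ℝ (m + 1) f x‖ ≤ B) (x : Ed d) :
    |(κ ⋆ f) x - f x| ≤ B * ∫ z, |κ z| * ‖z‖ ^ (m + 1) := by
  have hfc : Continuous f := hf.continuous
  have hκi {g : Ed d → ℝ} (hg : Continuous g) : Integrable fun z => κ z * g z :=
    hκ.isTestFunction.integrable_mul hg
  have hrem (z : Ed d) := norm_add_sub_taylor_le hf hB x (-z)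
  calc |(κ ⋆ f) x - f x|
      = ‖∫ z, κ z * (f (x + -z) - ∑ j ∈ Finset.range (m + 1),
          (j.factorial : ℝ)⁻¹ • iteratedFDeriv ℝ j f x (fun _ => -z))‖ := by
        conv_lhs => rw [← hκ.integral_mul_taylor f x, convolution_def]
        simp only [ContinuousLinearMap.lsmul_apply, mul_sub, sub_eq_add_neg x]
        rw [integral_sub (hκi (by fun_prop)) (hκi (by fun_prop)), Real.norm_eq_abs]
        rfl
    _ ≤ ∫ z, B * (|κ z| * ‖z‖ ^ (m + 1)) := by
        refine norm_integral_le_of_norm_le ?_ (Eventually.of_forall fun z => ?_)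
        · refine Integrable.const_mul (((hκi (g := fun z => ‖z‖ ^ (m + 1))
            (by fun_prop)).norm).congr (Eventually.of_forall fun z => ?_)) B
          simp
        · rw [norm_mul, mul_left_comm, ← norm_neg z]
          exact mul_le_mul_of_nonneg_left (hrem z) (norm_nonneg _)
    _ = B * ∫ z, |κ z| * ‖z‖ ^ (m + 1) := integral_const_mul _ _

theorem IsMollifierOfOrder.abs_scaled_convolution_sub_le (hκ : IsMollifierOfOrder m κ)
    (hf : ContDiff ℝ (m + 1) f) (hB : ∀ x, ‖iteratedFDeriv ℝ (m + 1) f x‖ ≤ B) {l : ℝ}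
    (hl : 0 < l) (x : Ed d) :
    |(scaled κ 0 l ⋆ f) x - f x| ≤ B * (∫ z, |κ z| * ‖z‖ ^ (m + 1)) * l ^ (m + 1) := by
  refine ((hκ.rescale hl).abs_convolution_sub_le hf hB x).trans_eq ?_
  simp only [abs_scaled κ 0 _ hl.le, integral_scaled_mul (fun w => |κ w|) _ 0 hl, zero_add,
    norm_smul, Real.norm_of_nonneg hl.le, mul_pow, mul_left_comm _ (l ^ (m + 1)),
    integral_const_mul]
  ring

theorem tendstoUniformly_convolution_lsmul {E F ι : Type*} [NormedAddCommGroup E]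
    [MeasurableSpace E] [BorelSpace E] [SecondCountableTopology E] {μ : Measure E} [SFinite μ]
    [μ.IsAddLeftInvariant] [NormedAddCommGroup F] [NormedSpace ℝ F] [CompleteSpace F]
    {p : Filter ι} {k : ι → E → ℝ} {g : ι → E → F} {G : E → F} {ρ : ι → ℝ} {c : ℝ}
    (hk : ∀ n, Integrable (k n) μ) (hk1 : ∀ n, ∫ x, k n x ∂μ = 1)
    (hkc : ∀ n, ∫ x, |k n x| ∂μ ≤ c) (hkρ : ∀ n, Function.support (k n) ⊆ ball 0 (ρ n))
    (hρ : Tendsto ρ p (𝓝 0)) (hg : ∀ n, AEStronglyMeasurable (g n) μ)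
    (hgG : TendstoUniformly g G p) (hG : UniformContinuous G) :
    TendstoUniformly (fun n => k n ⋆[ContinuousLinearMap.lsmul ℝ ℝ, μ] g n) G p := by
  rw [Metric.tendstoUniformly_iff] at hgG ⊢
  intro ε hε
  set η := ε / (2 * (|c| + 1))
  have hη : 0 < η := by positivity
  obtain ⟨δ, hδ, hGδ⟩ := Metric.uniformContinuous_iff.1 hG η hη
  filter_upwards [hgG η hη, hρ.eventually_lt_const hδ] with n hgn hρn x
  have hnear : ∀ x' ∈ ball x (ρ n), dist (g n x') (G x) ≤ 2 * η := fun x' hx' => by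
    have h₁ : dist (g n x') (G x') < η := by simpa only [dist_comm] using hgn x'
    have h₂ : dist (G x') (G x) < η := hGδ ((mem_ball.1 hx').trans hρn)
    linarith [dist_triangle (g n x') (G x') (G x)]
  have hG₁ : ∫ t, ContinuousLinearMap.lsmul ℝ ℝ (k n t) (G x) ∂μ = G x := by
    simp only [ContinuousLinearMap.lsmul_apply, integral_smul_const, hk1, one_smul]
  calc dist (G x) ((k n ⋆[ContinuousLinearMap.lsmul ℝ ℝ, μ] g n) x)
      ≤ ‖(ContinuousLinearMap.lsmul ℝ ℝ : ℝ →L[ℝ] F →L[ℝ] F)‖ * (∫ t, ‖k n t‖ ∂μ) * (2 * η) := by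
        have := dist_convolution_le' (ContinuousLinearMap.lsmul ℝ ℝ) (by positivity) (hk n) (hkρ n)
          (hg n) hnear
        rwa [hG₁, dist_comm] at this
    _ ≤ 1 * |c| * (2 * η) := by
        gcongr
        exacts [ContinuousLinearMap.opNorm_lsmul_le, (hkc n).trans (le_abs_self c)]
    _ < ε := by
        rw [one_mul, ← mul_assoc, mul_div_assoc', div_lt_iff₀ (by positivity)]
        nlinarith

end Approximation

section Telescoping

variable {d m : ℕ} {κ ψ f g : Ed d → ℝ} {T : (Ed d → ℝ) →ₗ[ℝ] ℝ} {a R B M : ℝ}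

theorem IsMollifierOfOrder.tendstoUniformly_scaled_convolution {F ι : Type*}
    [NormedAddCommGroup F] [NormedSpace ℝ F] [CompleteSpace F] (hκ : IsMollifierOfOrder m κ)
    {p : Filter ι} {l : ι → ℝ} (hl : ∀ n, 0 < l n) (hl0 : Tendsto l p (𝓝 0))
    {g : ι → Ed d → F} {G : Ed d → F} (hg : ∀ n, Continuous (g n)) (hgG : TendstoUniformly g G p)
    (hG : UniformContinuous G) :
    TendstoUniformly
      (fun n => scaled κ 0 (l n) ⋆[ContinuousLinearMap.lsmul ℝ ℝ, volume] g n) G p := by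
  obtain ⟨a, -, ha⟩ := exists_tsupport_subset_closedBall hκ.isTestFunction.2
  refine tendstoUniformly_convolution_lsmul (ρ := fun n => l n * (a + 1))
    (fun n => (hκ.rescale (hl n)).isTestFunction.integrable)
    (fun n => (hκ.rescale (hl n)).integral_eq_one)
    (fun n => (integral_abs_scaled κ 0 (hl n)).le) (fun n => ?_)
    (by simpa using hl0.mul_const (a + 1)) (fun n => (hg n).aestronglyMeasurable) hgG hG
  refine (subset_tsupport _).trans ((tsupport_scaled_subset ha 0 (hl n)).trans ?_)
  exact closedBall_subset_ball (mul_lt_mul_of_pos_left (lt_add_one a) (hl n))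

theorem scaled_convolution_mem_testFunctionsIn (ha : 0 ≤ a)
    (hf : f ∈ testFunctionsIn (closedBall 0 a)) (hψ : ψ ∈ testFunctionsIn (closedBall 0 R)) {l : ℝ}
    (hl : l ∈ Ioc 0 1) : scaled f 0 l ⋆ ψ ∈ testFunctionsIn (closedBall 0 (a + R)) :=
  have hfl : IsTestFunction (scaled f 0 l) := hf.1.rescale 0 hl.1.ne'
  ⟨hψ.1.convolution hfl.continuous hfl.2, tsupport_convolution_subset
    ((tsupport_scaled_subset hf.2 0 hl.1).trans
      (closedBall_subset_closedBall (mul_le_of_le_one_left ha hl.2))) hψ.2⟩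

theorem IsMollifierOfOrder.tendsto_apply_scaled_convolution (hκ : IsMollifierOfOrder m κ)
    (hT : IsDistribution T) (hψ : IsTestFunction ψ) {k l : ℕ → ℝ} (hk : ∀ n, k n ∈ Ioc 0 1)
    (hl : ∀ n, l n ∈ Ioc 0 1) (hk0 : Tendsto k atTop (𝓝 0)) (hl0 : Tendsto l atTop (𝓝 0)) :
    Tendsto (fun n => T (scaled κ 0 (k n) ⋆ (scaled κ 0 (l n) ⋆ ψ))) atTop (𝓝 (T ψ)) := by
  obtain ⟨a, ha, hκa⟩ := exists_tsupport_subset_closedBall hκ.isTestFunction.2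
  obtain ⟨R, -, hψR⟩ := exists_tsupport_subset_closedBall hψ.2
  have hlψ (n : ℕ) := scaled_convolution_mem_testFunctionsIn ha.le ⟨hκ.isTestFunction, hκa⟩
    ⟨hψ, hψR⟩ (hl n)
  have hklψ (n : ℕ) := scaled_convolution_mem_testFunctionsIn ha.le ⟨hκ.isTestFunction, hκa⟩
    (hlψ n) (hk n)
  refine hT.tendsto (isCompact_closedBall 0 (a + (a + R))) (fun n => (hklψ n).1)
    (fun n => (hklψ n).2) hψ (hψR.trans (closedBall_subset_closedBall (by linarith))) fun q => ?_
  have hloc {r : ℝ} (hr : r ∈ Ioc 0 1) : LocallyIntegrable (scaled κ 0 r) :=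
    (hκ.rescale hr.1).isTestFunction.integrable.locallyIntegrable
  have hjet : UniformContinuous (jet q ψ) :=
    (hasCompactSupport_jet hψ.2).uniformContinuous_of_continuous (continuous_jet hψ.1)
  have hconst : TendstoUniformly (fun _ : ℕ => jet q ψ) (jet q ψ) atTop :=
    fun u hu => Eventually.of_forall fun _ _ => refl_mem_uniformity hu
  have hinner : TendstoUniformly (fun n => jet q (scaled κ 0 (l n) ⋆ ψ)) (jet q ψ) atTop := by
    simp only [fun n => jet_convolution (q := q) (hloc (hl n)) hψ.1 hψ.2]
    exact hκ.tendstoUniformly_scaled_convolution (fun n => (hl n).1) hl0 (fun _ => hjet.continuous)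
      hconst hjet
  simp only [fun n => jet_convolution (q := q) (hloc (hk n)) (hlψ n).1.1 (hlψ n).1.2]
  exact hκ.tendstoUniformly_scaled_convolution (fun n => (hk n).1) hk0
    (fun n => continuous_jet (hlψ n).1.1) hinner hjet

theorem integral_abs_le_of_tsupport_subset (hg : tsupport g ⊆ closedBall 0 R)
    (hB : ∀ x, |g x| ≤ B) :
    ∫ x, |g x| ≤ B * volume.real (closedBall (0 : Ed d) R) := by
  have hg0 : ∀ x ∉ closedBall 0 R, |g x| = 0 := fun x hx => by
    rw [image_eq_zero_of_notMem_tsupport fun h => hx (hg h), abs_zero]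
  rw [← setIntegral_eq_integral_of_forall_compl_eq_zero hg0]
  refine (Real.le_norm_self _).trans (norm_setIntegral_le_of_norm_le_const
    measure_closedBall_lt_top fun x _ => ?_)
  simpa using hB x

theorem IsDistribution.abs_apply_convolution_scaled_le (hT : IsDistribution T) (hR : 0 ≤ R)
    (hg : g ∈ testFunctionsIn (closedBall 0 R)) (hB : ∀ x, |g x| ≤ B) (hf : IsTestFunction f)
    {l : ℝ} (hl : l ≠ 0) (hM : ∀ y ∈ closedBall 0 R, |T (scaled f y l)| ≤ M) :
    |T (g ⋆ scaled f 0 l)| ≤ B * volume.real (closedBall (0 : Ed d) R) * M := by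
  have hM0 : 0 ≤ M := (abs_nonneg _).trans (hM 0 (mem_closedBall_self hR))
  refine (hT.abs_apply_convolution_le hg.1.continuous hg.1.2 (hf.rescale 0 hl) fun y hy => ?_).trans
    (mul_le_mul_of_nonneg_right (integral_abs_le_of_tsupport_subset hg.2 hB) hM0)
  rw [scaled_comp_sub, zero_add]
  exact hM y (hg.2 hy)

theorem IsDistribution.abs_apply_scaled_convolution_le (hT : IsDistribution T) (ha : 0 ≤ a)
    (hf : f ∈ testFunctionsIn (closedBall 0 a)) (hR : 0 ≤ R)
    (hψ : ψ ∈ testFunctionsIn (closedBall 0 R)) (hB : ∀ x, |ψ x| ≤ B) {l₀ l₁ : ℝ}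
    (hl₀ : l₀ ∈ Ioc 0 1) (hl₁ : 0 < l₁)
    (hM : ∀ y ∈ closedBall 0 (a + R), |T (scaled f y l₁)| ≤ M) :
    |T (scaled f 0 l₁ ⋆ (scaled f 0 l₀ ⋆ ψ))| ≤
      (∫ z, |f z|) * B * volume.real (closedBall (0 : Ed d) (a + R)) * M := by
  have hfψ (x : Ed d) : |(scaled f 0 l₀ ⋆ ψ) x| ≤ (∫ z, |f z|) * B := by
    rw [← integral_abs_scaled f 0 hl₀.1]
    exact norm_convolution_lsmul_le (hf.1.rescale 0 hl₀.1.ne').integrable (f := ψ) hB x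
  rw [convolution_lsmul_comm]
  exact hT.abs_apply_convolution_scaled_le (add_nonneg ha hR)
    (scaled_convolution_mem_testFunctionsIn ha hf hψ hl₀) hfψ hf.1 hl₁.ne' hM

/-- Both convolutions contain `κ` at the middle scale `l₁`, so that `T` is only tested against
`κ` at that scale, while the weight `κ_{l₀} ⋆ ψ - κ_{l₂} ⋆ ψ` is small. -/
theorem IsMollifierOfOrder.abs_apply_convolution_sub_le (hκ : IsMollifierOfOrder m κ)
    (hT : IsDistribution T) (ha : 0 ≤ a) (hκa : tsupport κ ⊆ closedBall 0 a) (hR : 0 ≤ R)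
    (hψ : ψ ∈ testFunctionsIn (closedBall 0 R))
    (hB : ∀ x, ‖iteratedFDeriv ℝ (m + 1) ψ x‖ ≤ B) {l₀ l₁ l₂ : ℝ} (hl₀ : l₀ ∈ Ioc 0 1)
    (hl₁ : l₁ ∈ Ioc 0 1) (hl₂ : l₂ ∈ Ioc 0 l₀)
    (hM : ∀ y ∈ closedBall 0 (a + R), |T (scaled κ y l₁)| ≤ M) :
    |T (scaled κ 0 l₁ ⋆ (scaled κ 0 l₀ ⋆ ψ)) - T (scaled κ 0 l₂ ⋆ (scaled κ 0 l₁ ⋆ ψ))| ≤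
      2 * (B * (∫ z, |κ z| * ‖z‖ ^ (m + 1)) * l₀ ^ (m + 1)) *
        volume.real (closedBall (0 : Ed d) (a + R)) * M := by
  have hψm : ContDiff ℝ (m + 1) ψ := hψ.1.1.of_le (by exact_mod_cast le_top)
  have hl₂' : l₂ ∈ Ioc 0 1 := ⟨hl₂.1, hl₂.2.trans hl₀.2⟩
  have hκt {r : ℝ} (hr : r ∈ Ioc 0 1) := (hκ.rescale hr.1).isTestFunction
  have hκψ {r : ℝ} (hr : r ∈ Ioc 0 1) :=
    scaled_convolution_mem_testFunctionsIn ha ⟨hκ.isTestFunction, hκa⟩ hψ hr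
  set g := scaled κ 0 l₀ ⋆ ψ - scaled κ 0 l₂ ⋆ ψ with hg
  have hswap : scaled κ 0 l₁ ⋆ (scaled κ 0 l₀ ⋆ ψ) - scaled κ 0 l₂ ⋆ (scaled κ 0 l₁ ⋆ ψ) =
      g ⋆ scaled κ 0 l₁ := by
    rw [convolution_mul_left_comm (hκt hl₂').continuous (hκt hl₂').2 (hκt hl₁).continuous
      (hκt hl₁).2 hψ.1.continuous, ← convolution_lsmul_sub (hκt hl₁).continuous (hκt hl₁).2
      (hκψ hl₀).1.continuous (hκψ hl₂').1.continuous, convolution_lsmul_comm]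
  have hgB (x : Ed d) : |g x| ≤ 2 * (B * (∫ z, |κ z| * ‖z‖ ^ (m + 1)) * l₀ ^ (m + 1)) := by
    have hD : 0 ≤ B * ∫ z, |κ z| * ‖z‖ ^ (m + 1) :=
      mul_nonneg ((norm_nonneg _).trans (hB 0)) (integral_nonneg fun z => by positivity)
    have h₀ := hκ.abs_scaled_convolution_sub_le hψm hB hl₀.1 x
    have h₂ := hκ.abs_scaled_convolution_sub_le hψm hB hl₂.1 x
    have hl := mul_le_mul_of_nonneg_left (pow_le_pow_left₀ hl₂.1.le hl₂.2 (m + 1)) hD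
    rw [hg, Pi.sub_apply, ← sub_sub_sub_cancel_right _ _ (ψ x)]
    linarith [abs_sub ((scaled κ 0 l₀ ⋆ ψ) x - ψ x) ((scaled κ 0 l₂ ⋆ ψ) x - ψ x)]
  rw [← map_sub, hswap]
  exact hT.abs_apply_convolution_scaled_le (add_nonneg ha hR)
    (Submodule.sub_mem _ (hκψ hl₀) (hκψ hl₂')) hgB hκ.isTestFunction hl₁.1.ne' hM

theorem half_pow_mem_Ioc (n : ℕ) : (1 / 2 : ℝ) ^ n ∈ Ioc 0 1 :=
  ⟨by positivity, pow_le_one₀ (by norm_num) (by norm_num)⟩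

theorem half_pow_mul_half_rpow_lt_one {n : ℕ} {α : ℝ} (h : 0 < n + α) :
    (1 / 2 : ℝ) ^ n * (1 / 2) ^ α < 1 := by
  rw [← Real.rpow_natCast, ← Real.rpow_add (by norm_num)]
  exact Real.rpow_lt_one (by norm_num) (by norm_num) h

theorem IsMollifierOfOrder.exists_abs_apply_le (hκ : IsMollifierOfOrder m κ) (ha : 0 ≤ a)
    (hκa : tsupport κ ⊆ closedBall 0 a) (hR : 0 ≤ R) {α : ℝ} (hα : 0 < m + 1 + α) :
    ∃ C : ℝ, ∀ (T : (Ed d → ℝ) →ₗ[ℝ] ℝ) (ψ : Ed d → ℝ) (B M : ℝ), IsDistribution T →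
      ψ ∈ testFunctionsIn (closedBall 0 R) → (∀ x, |ψ x| ≤ B) →
      (∀ x, ‖iteratedFDeriv ℝ (m + 1) ψ x‖ ≤ B) →
      (∀ n : ℕ, ∀ y ∈ closedBall (0 : Ed d) (a + R),
        |T (scaled κ y ((1 / 2) ^ (n + 1)))| ≤ M * ((1 / 2) ^ (n + 1)) ^ α) →
      |T ψ| ≤ C * (B * M) := by
  set V := volume.real (closedBall (0 : Ed d) (a + R))
  set r : ℝ := (1 / 2) ^ (m + 1) * (1 / 2) ^ α
  have hr : r < 1 := half_pow_mul_half_rpow_lt_one (by exact_mod_cast hα)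
  have hscale0 : Tendsto (fun n : ℕ => (1 / 2 : ℝ) ^ n) atTop (𝓝 0) :=
    tendsto_pow_atTop_nhds_zero_of_lt_one (by norm_num) (by norm_num)
  refine ⟨((∫ z, |κ z|) * V + 2 * (∫ z, |κ z| * ‖z‖ ^ (m + 1)) * V / (1 - r)) * (1 / 2) ^ α,
    fun T ψ B M hT hψ hψB hψD hM => ?_⟩
  let u (n : ℕ) : ℝ := T (scaled κ 0 ((1 / 2) ^ (n + 1)) ⋆ (scaled κ 0 ((1 / 2) ^ n) ⋆ ψ))
  have hu : Tendsto u atTop (𝓝 (T ψ)) :=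
    hκ.tendsto_apply_scaled_convolution hT hψ.1 (fun n => half_pow_mem_Ioc (n + 1))
      half_pow_mem_Ioc ((tendsto_add_atTop_iff_nat 1).2 hscale0) hscale0
  have hdist (n : ℕ) : dist (u n) (u (n + 1)) ≤
      2 * (B * (∫ z, |κ z| * ‖z‖ ^ (m + 1))) * V * (M * (1 / 2) ^ α) * r ^ n := by
    refine (hκ.abs_apply_convolution_sub_le hT ha hκa hR hψ hψD (half_pow_mem_Ioc n)
      (half_pow_mem_Ioc (n + 1)) ⟨(half_pow_mem_Ioc _).1,
        pow_le_pow_of_le_one (by norm_num) (by norm_num) (by lia)⟩ (hM n)).trans_eq ?_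
    rw [← Real.rpow_pow_comm (by norm_num), mul_pow, pow_right_comm, pow_succ ((1 / 2 : ℝ) ^ α)]
    ring
  have hu0 : |u 0| ≤ (∫ z, |κ z|) * B * V * (M * (1 / 2) ^ α) := by
    have hM₀ : ∀ y ∈ closedBall 0 (a + R), |T (scaled κ y (1 / 2))| ≤ M * (1 / 2) ^ α :=
      fun y hy => by simpa only [zero_add, pow_one] using hM 0 y hy
    simpa only [u, pow_zero, zero_add, pow_one] using
      hT.abs_apply_scaled_convolution_le ha ⟨hκ.isTestFunction, hκa⟩ hR hψ hψB ⟨one_pos, le_rfl⟩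
        one_half_pos hM₀
  have hlim := dist_le_of_le_geometric_of_tendsto₀ r _ hr hdist hu
  calc |T ψ| ≤ |u 0| + dist (u 0) (T ψ) := by
        rw [Real.dist_eq]
        linarith [abs_sub_abs_le_abs_sub (T ψ) (u 0), abs_sub_comm (T ψ) (u 0)]
    _ ≤ _ := add_le_add hu0 hlim
    _ = _ := by ring

end Telescoping

section Rescaling

variable {d : ℕ} {T : (Ed d → ℝ) →ₗ[ℝ] ℝ} {f : Ed d → ℝ} {l : ℝ}

theorem IsTestFunction.Cnorm_scaled_le (hf : IsTestFunction f) (q : ℕ) (x : Ed d)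
    (hl : l ∈ Ioc 0 1) : Cnorm q (scaled f x l) ≤ l⁻¹ ^ (d + q) * Cnorm q f := by
  have hl0 : 0 < l⁻¹ := inv_pos.2 hl.1
  refine ciSup_le fun i => ciSup_le fun z => ?_
  rw [iteratedFDeriv_scaled hf.1, norm_smul, norm_smul, ← inv_pow,
    Real.norm_of_nonneg (by positivity), Real.norm_of_nonneg (by positivity), ← mul_assoc,
    ← pow_add]
  exact mul_le_mul (pow_le_pow_right₀ ((one_le_inv₀ hl.1).2 hl.2) (by lia))
    (hf.norm_iteratedFDeriv_le_Cnorm (Nat.lt_succ_iff.1 i.2) _) (norm_nonneg _) (by positivity)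

theorem IsDistribution.comp_scaledₗ (hT : IsDistribution T) (x : Ed d) (hl : l ∈ Ioc 0 1) :
    IsDistribution (T ∘ₗ scaledₗ x l) := by
  intro K hK
  obtain ⟨a, ha⟩ := hK.isBounded.subset_closedBall 0
  obtain ⟨q, C, hC⟩ := hT (closedBall x (l * a)) (isCompact_closedBall _ _)
  refine ⟨q, |C| * l⁻¹ ^ (d + q), fun f hf hfK => ?_⟩
  calc |T (scaled f x l)|
      ≤ C * Cnorm q (scaled f x l) :=
        hC _ (hf.rescale x hl.1.ne') (tsupport_scaled_subset (hfK.trans ha) x hl.1)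
    _ ≤ |C| * Cnorm q (scaled f x l) :=
        mul_le_mul_of_nonneg_right (le_abs_self C) (Cnorm_nonneg _ _)
    _ ≤ |C| * (l⁻¹ ^ (d + q) * Cnorm q f) :=
        mul_le_mul_of_nonneg_left (hf.Cnorm_scaled_le q x hl) (abs_nonneg C)
    _ = |C| * l⁻¹ ^ (d + q) * Cnorm q f := (mul_assoc _ _ _).symm

end Rescaling

section DyadicBound

variable {d : ℕ} {α : ℝ} {T : (Ed d → ℝ) →ₗ[ℝ] ℝ} {φ κ : Ed d → ℝ}

/-- The functions `φ` satisfying `|T(φ_x^ε)| ≲ ε^α` at the dyadic scales `ε = 2^{-k}`, `k ≥ 1`,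
uniformly over `x` in bounded sets. -/
def dyadicallyBounded (α : ℝ) (T : (Ed d → ℝ) →ₗ[ℝ] ℝ) : Submodule ℝ (Ed d → ℝ) where
  carrier := {φ | ∀ R : ℝ, ∃ C : ℝ, ∀ x ∈ closedBall (0 : Ed d) R, ∀ k : ℕ, 1 ≤ k →
    |T (scaled φ x ((1 / 2) ^ k))| ≤ C * ((1 / 2) ^ k) ^ α}
  add_mem' {φ ψ} hφ hψ R := by
    obtain ⟨C, hC⟩ := hφ R
    obtain ⟨D, hD⟩ := hψ R
    refine ⟨C + D, fun x hx k hk => ?_⟩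
    rw [add_mul]
    change |(T ∘ₗ scaledₗ x _) (φ + ψ)| ≤ _
    rw [map_add]
    exact (abs_add_le _ _).trans (add_le_add (hC x hx k hk) (hD x hx k hk))
  zero_mem' R := by
    refine ⟨0, fun x _ k _ => ?_⟩
    change |(T ∘ₗ scaledₗ x _) 0| ≤ _
    rw [map_zero, abs_zero, zero_mul]
  smul_mem' c φ hφ R := by
    obtain ⟨C, hC⟩ := hφ R
    refine ⟨|c| * C, fun x hx k hk => ?_⟩
    change |(T ∘ₗ scaledₗ x _) (c • φ)| ≤ _
    rw [map_smul, smul_eq_mul, abs_mul, mul_assoc]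
    exact mul_le_mul_of_nonneg_left (hC x hx k hk) (abs_nonneg c)

theorem scaled_mem_dyadicallyBounded (hφ : φ ∈ dyadicallyBounded α T) (i : ℕ) :
    scaled φ 0 ((1 / 2) ^ i) ∈ dyadicallyBounded α T := by
  intro R
  obtain ⟨C, hC⟩ := hφ R
  refine ⟨C * ((1 / 2) ^ i) ^ α, fun x hx k hk => ?_⟩
  rw [scaled_scaled _ _ _ _ (by positivity), smul_zero, add_zero, ← pow_add, mul_assoc,
    ← Real.mul_rpow (by positivity) (by positivity), ← pow_add, add_comm i]
  exact hC x hx (k + i) (by lia)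

theorem abs_apply_comp_scaledₗ_le {a b C : ℝ}
    (hC : ∀ x ∈ closedBall (0 : Ed d) (b + a), ∀ k : ℕ, 1 ≤ k →
      |T (scaled φ x ((1 / 2) ^ k))| ≤ C * ((1 / 2) ^ k) ^ α)
    {x y : Ed d} (hx : x ∈ closedBall 0 b) (hy : y ∈ closedBall 0 a) (N n : ℕ) :
    |(T ∘ₗ scaledₗ x ((1 / 2) ^ N)) (scaled φ y ((1 / 2) ^ (n + 1)))| ≤
      C * ((1 / 2) ^ N) ^ α * ((1 / 2) ^ (n + 1)) ^ α := by
  have hxy : x + (1 / 2 : ℝ) ^ N • y ∈ closedBall 0 (b + a) := by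
    rw [mem_closedBall_zero_iff] at hx hy ⊢
    have hle : (1 / 2 : ℝ) ^ N * ‖y‖ ≤ ‖y‖ :=
      mul_le_of_le_one_left (norm_nonneg _) (half_pow_mem_Ioc N).2
    refine (norm_add_le _ _).trans (add_le_add hx ?_)
    rw [norm_smul, Real.norm_of_nonneg (by positivity)]
    exact hle.trans hy
  change |T (scaled (scaled φ y _) x _)| ≤ _
  rw [scaled_scaled _ _ _ _ (by positivity), ← pow_add, mul_assoc,
    ← Real.mul_rpow (by positivity) (by positivity), ← pow_add]
  exact hC _ hxy _ (by lia)

theorem Br.scaled_mem_testFunctionsIn {r : ℕ} {ψ : Ed d → ℝ} (hψ : Br r ψ) {s : ℝ}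
    (hs : s ∈ Ioc 0 1) : scaled ψ 0 s ∈ testFunctionsIn (closedBall 0 1) :=
  ⟨hψ.1.rescale 0 hs.1.ne', (tsupport_scaled_subset hψ.2.1 0 hs.1).trans
    (closedBall_subset_closedBall (by simpa using hs.2))⟩

theorem Br.norm_iteratedFDeriv_scaled_le {r i : ℕ} {ψ : Ed d → ℝ} (hψ : Br r ψ) (hi : i ≤ r)
    (x : Ed d) {s : ℝ} (hs : s ∈ Ioc 0 1) (z : Ed d) :
    ‖iteratedFDeriv ℝ i (scaled ψ x s) z‖ ≤ s⁻¹ ^ (d + r) := by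
  have hs0 : 0 ≤ s⁻¹ ^ (d + r) := pow_nonneg (inv_nonneg.2 hs.1.le) _
  exact ((hψ.1.rescale x hs.1.ne').norm_iteratedFDeriv_le_Cnorm hi z).trans
    ((hψ.1.Cnorm_scaled_le r x hs).trans (mul_le_of_le_one_right hs0 hψ.2.2))

theorem IsMollifierOfOrder.holderNeg (hκ : IsMollifierOfOrder ⌊-α⌋₊ κ) (hα : α ≤ 0)
    (hT : IsDistribution T) (hκT : κ ∈ dyadicallyBounded α T) : HolderNeg α T := by
  intro K hK
  obtain ⟨a, ha, hκa⟩ := exists_tsupport_subset_closedBall hκ.isTestFunction.2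
  obtain ⟨b, hb⟩ := hK.isBounded.subset_closedBall 0
  have hr : 0 < (⌊-α⌋₊ : ℝ) + 1 + α := by linarith [Nat.lt_floor_add_one (-α)]
  obtain ⟨C₀, hC₀⟩ := hκ.exists_abs_apply_le ha.le hκa zero_le_one hr
  obtain ⟨C, hC⟩ := hκT (b + (a + 1))
  refine ⟨|C₀ * (2 ^ (d + rIndex α) * C)|, fun x hx ε hε ψ hψ => ?_⟩
  obtain ⟨N, hN, hεN⟩ := exists_nat_pow_near_of_lt_one hε.1 hε.2 (y := (1 / 2 : ℝ))
    (by norm_num) (by norm_num)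
  set l := (1 / 2 : ℝ) ^ N
  have hl : l ∈ Ioc 0 1 := half_pow_mem_Ioc N
  have hs : ε / l ∈ Ioc 0 1 := ⟨div_pos hε.1 hl.1, (div_le_one hl.1).2 hεN⟩
  have hs2 : (ε / l)⁻¹ ≤ 2 := by
    rw [inv_div, div_le_iff₀ hε.1]
    rw [pow_succ] at hN
    linarith
  have hψB {i : ℕ} (hi : i ≤ rIndex α) (z : Ed d) :
      ‖iteratedFDeriv ℝ i (scaled ψ 0 (ε / l)) z‖ ≤ 2 ^ (d + rIndex α) :=
    (hψ.norm_iteratedFDeriv_scaled_le hi 0 hs z).trans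
      (pow_le_pow_left₀ (inv_nonneg.2 hs.1.le) hs2 _)
  have hTψ : (T ∘ₗ scaledₗ x l) (scaled ψ 0 (ε / l)) = T (scaled ψ x ε) := by
    change T (scaled (scaled ψ 0 (ε / l)) x l) = _
    rw [scaled_scaled _ _ _ _ hl.1.ne', smul_zero, add_zero, mul_div_cancel₀ _ hl.1.ne']
  calc |T (scaled ψ x ε)|
      ≤ C₀ * (2 ^ (d + rIndex α) * (C * l ^ α)) := by
        rw [← hTψ]
        exact hC₀ _ _ _ _ (hT.comp_scaledₗ x hl) (hψ.scaled_mem_testFunctionsIn hs)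
          (fun z => by simpa using hψB (Nat.zero_le _) z) (hψB le_rfl)
          (fun n y hy => abs_apply_comp_scaledₗ_le hC (hb hx) hy N n)
    _ = C₀ * (2 ^ (d + rIndex α) * C) * l ^ α := by ring
    _ ≤ |C₀ * (2 ^ (d + rIndex α) * C)| * ε ^ α :=
        mul_le_mul (le_abs_self _) (Real.rpow_le_rpow_of_nonpos hε.1 hεN hα)
          (Real.rpow_nonneg hl.1.le _) (abs_nonneg _)

theorem exists_isMollifierOfOrder_mem_dyadicallyBounded (hφ : IsTestFunction φ)
    (hφ0 : ∫ z, φ z ≠ 0) (hφT : φ ∈ dyadicallyBounded α T) (m : ℕ) :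
    ∃ κ, IsMollifierOfOrder m κ ∧ κ ∈ dyadicallyBounded α T :=
  have ⟨_, hc⟩ := exists_isMollifierOfOrder_sum_smul_scaled hφ hφ0 m
  ⟨_, hc, Submodule.sum_mem _ fun i _ =>
    Submodule.smul_mem _ _ (scaled_mem_dyadicallyBounded hφT i)⟩

end DyadicBound

section Criterion

variable {d : ℕ} {α : ℝ} {T : (Ed d → ℝ) →ₗ[ℝ] ℝ} {φ : Ed d → ℝ}

theorem dense_setOf_forall_rational : Dense {x : Ed d | ∀ i, ∃ q : ℚ, x i = q} := by
  have hpi : DenseRange (Pi.map fun (_ : Fin d) (q : ℚ) => (q : ℝ)) :=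
    DenseRange.piMap fun _ => Rat.denseRange_cast
  refine ((EuclideanSpace.equiv (Fin d) ℝ).symm.surjective.denseRange.comp hpi
    (EuclideanSpace.equiv (Fin d) ℝ).symm.continuous).mono ?_
  rintro _ ⟨q, rfl⟩ i
  exact ⟨q i, rfl⟩

theorem IsDistribution.abs_apply_scaled_le_of_dense (hT : IsDistribution T)
    (hφ : IsTestFunction φ) {D : Set (Ed d)} (hD : Dense D) {l : ℝ} (hl : l ≠ 0) {R M : ℝ}
    (h : ∀ x ∈ closedBall 0 R, x ∈ D → |T (scaled φ x l)| ≤ M) {x : Ed d} (hx : x ∈ ball 0 R) :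
    |T (scaled φ x l)| ≤ M := by
  have hcont : Continuous fun y => |T (scaled φ y l)| := by
    simpa only [scaled_comp_sub, zero_add] using
      (hT.continuous_apply_comp_sub (hφ.rescale 0 hl)).abs
  refine closure_minimal (fun y hy => ?_) (isClosed_Iic.preimage hcont)
    (hD.open_subset_closure_inter isOpen_ball hx)
  exact h y (ball_subset_closedBall hy.1) hy.2

theorem mem_dyadicallyBounded_of_rational (hT : IsDistribution T) (hφ : IsTestFunction φ)
    (h : ∀ n : ℕ, ∃ C : ℝ, ∀ x ∈ closedBall (0 : Ed d) n, (∀ i, ∃ q : ℚ, x i = q) →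
      ∀ k : ℕ, 1 ≤ k → |T (scaled φ x ((1 / 2) ^ k))| ≤ C * ((1 / 2) ^ k) ^ α) :
    φ ∈ dyadicallyBounded α T := by
  intro R
  obtain ⟨n, hn⟩ := exists_nat_gt R
  obtain ⟨C, hC⟩ := h n
  exact ⟨C, fun x hx k hk => hT.abs_apply_scaled_le_of_dense hφ dense_setOf_forall_rational
    (by positivity) (fun y hy hyq => hC y hy hyq k hk) (closedBall_subset_ball hn hx)⟩

theorem exists_Br_integral_ne_zero (d r : ℕ) : ∃ φ : Ed d → ℝ, Br r φ ∧ ∫ z, φ z ≠ 0 := by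
  let f : ContDiffBump (0 : Ed d) := ⟨1 / 2, 1, by norm_num, by norm_num⟩
  have hf : IsTestFunction f := ⟨f.contDiff, f.hasCompactSupport⟩
  have hr : 0 < 1 + Cnorm r f := add_pos_of_pos_of_nonneg one_pos (Cnorm_nonneg r f)
  have hmem : (1 + Cnorm r f)⁻¹ • ⇑f ∈ testFunctionsIn (closedBall 0 1) :=
    Submodule.smul_mem _ _ ⟨hf, f.tsupport_eq.subset⟩
  refine ⟨(1 + Cnorm r f)⁻¹ • ⇑f, ⟨hmem.1, hmem.2, ciSup_le fun i => ciSup_le fun x => ?_⟩, ?_⟩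
  · rw [iteratedFDeriv_const_smul_apply (hf.1.of_le (by exact_mod_cast le_top)).contDiffAt,
      norm_smul, Real.norm_of_nonneg (by positivity), inv_mul_le_iff₀ hr]
    linarith [hf.norm_iteratedFDeriv_le_Cnorm (Nat.lt_succ_iff.1 i.2) x]
  · simp only [Pi.smul_apply, integral_smul]
    exact smul_ne_zero (inv_ne_zero hr.ne') f.integral_pos.ne'

end Criterion

/-- Countable criterion for negative Hölder spaces: rational points
and dyadic scales suffice. -/
theorem stmt12 {d : ℕ} (α : ℝ) (hα : α ≤ 0)
    (T : (Ed d → ℝ) →ₗ[ℝ] ℝ) (hT : IsDistribution T) :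
    HolderNeg α T ↔
      ∃ φ : Ed d → ℝ, IsTestFunction φ ∧ (∫ x, φ x) ≠ 0 ∧
        ∀ n : ℕ, ∃ C : ℝ, ∀ x ∈ closedBall (0 : Ed d) n,
          (∀ i : Fin d, ∃ q : ℚ, x i = (q : ℝ)) → ∀ k : ℕ, 1 ≤ k →
            |T (scaled φ x ((2:ℝ) ^ (-(k:ℤ))))| ≤ C * ((2:ℝ) ^ (-(k:ℤ))) ^ α := by
  simp only [zpow_neg, zpow_natCast, ← one_div, ← one_div_pow]
  constructor
  · intro h
    obtain ⟨φ, hφ, hφ0⟩ := exists_Br_integral_ne_zero d (rIndex α)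
    refine ⟨φ, hφ.1, hφ0, fun n => ?_⟩
    obtain ⟨C, hC⟩ := h (closedBall 0 n) (isCompact_closedBall _ _)
    exact ⟨C, fun x hx _ k _ => hC x hx _ (half_pow_mem_Ioc k) φ hφ⟩
  · rintro ⟨φ, hφ, hφ0, h⟩
    have hφT : φ ∈ dyadicallyBounded α T := mem_dyadicallyBounded_of_rational hT hφ h
    obtain ⟨κ, hκ, hκT⟩ := exists_isMollifierOfOrder_mem_dyadicallyBounded hφ hφ0 hφT ⌊-α⌋₊
    exact hκ.holderNeg hα hT hκT
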